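/- arXiv:2601.21388 — 2 statements merged into one kernel-verified Lean document; each statement's English description precedes it below -/
import Mathlib

section
/- For every real number y, −(1/45)·cos(3y) + (3/10)·cos(2y) − 3·cos(y) + 49/18 ≤ y². Equivalently, for every h > 0 and every real ξ, the sixth-order discrete Laplacian symbol satisfies ψ_h^{(6)}(ξ) ≤ ξ². -/
/-- Discrete symbol of the sixth-order (p = 6) central finite difference
approximation of `-d²/dx²`. -/
noncomputable def psi6 (h ξ : ℝ) : ℝ :=
  (-(1/45) * Real.cos (3*ξ*h) + (3/10) * Real.cos (2*ξ*h) - 3 * Real.cos (ξ*h) + 49/18) / h^2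

theorem aux_deriv_nonneg (y : ℝ) (hy : 0 ≤ y) :
    0 ≤ 2*y - ((1/15) * Real.sin (3*y) - (3/5) * Real.sin (2*y) + 3 * Real.sin y) := by
  have hd : ∀ x : ℝ, HasDerivAt (fun y : ℝ =>
      2*y - ((1/15) * Real.sin (3*y) - (3/5) * Real.sin (2*y) + 3 * Real.sin y))
      (4/5 * (1 - Real.cos x)^3) x := by
    intro x
    have h1 : HasDerivAt (fun y : ℝ => 2*y) (2*1) x := (hasDerivAt_id' x).const_mul 2
    have h2 := ((hasDerivAt_id' x).const_mul 3).sin.const_mul (1/15)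
    have h3 := (h1.sin).const_mul (3/5)
    have h4 := (Real.hasDerivAt_sin x).const_mul 3
    refine (h1.sub ((h2.sub h3).add h4)).congr_deriv ?_
    rw [Real.cos_three_mul, Real.cos_two_mul]
    ring
  have hm := monotone_of_hasDerivAt_nonneg hd (fun x => by
    have := Real.cos_le_one x
    have : 0 ≤ 1 - Real.cos x := by linarith
    positivity)
  simpa using hm hy

theorem aux_nonneg (y : ℝ) (hy : 0 ≤ y) :
    -(1/45) * Real.cos (3*y) + (3/10) * Real.cos (2*y) - 3 * Real.cos y + 49/18 ≤ y^2 := by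
  have hd : ∀ x : ℝ, HasDerivAt (fun y : ℝ =>
      y^2 - (-(1/45) * Real.cos (3*y) + (3/10) * Real.cos (2*y) - 3 * Real.cos y + 49/18))
      (2*x - ((1/15) * Real.sin (3*x) - (3/5) * Real.sin (2*x) + 3 * Real.sin x)) x := by
    intro x
    have h1 := hasDerivAt_pow 2 x
    have h2 := ((hasDerivAt_id' x).const_mul 3).cos.const_mul (-(1/45))
    have h3 := ((hasDerivAt_id' x).const_mul 2).cos.const_mul (3/10)
    have h4 := (Real.hasDerivAt_cos x).const_mul 3
    refine (h1.sub (((h2.add h3).sub h4).add_const (49/18))).congr_deriv ?_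
    norm_num
    ring
  have hm : MonotoneOn (fun y : ℝ =>
      y^2 - (-(1/45) * Real.cos (3*y) + (3/10) * Real.cos (2*y) - 3 * Real.cos y + 49/18))
      (Set.Ici 0) := by
    refine monotoneOn_of_deriv_nonneg (convex_Ici 0)
      (fun x _ => (hd x).continuousAt.continuousWithinAt)
      (fun x _ => (hd x).differentiableAt.differentiableWithinAt) ?_
    intro x hx
    rw [interior_Ici] at hx
    rw [(hd x).deriv]
    exact aux_deriv_nonneg x (le_of_lt hx)
  have := hm (Set.mem_Ici.2 le_rfl) (Set.mem_Ici.2 hy) hy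
  norm_num at this
  linarith

theorem aux_all (y : ℝ) :
    -(1/45) * Real.cos (3*y) + (3/10) * Real.cos (2*y) - 3 * Real.cos y + 49/18 ≤ y^2 := by
  rcases le_total 0 y with h | h
  · exact aux_nonneg y h
  · have := aux_nonneg (-y) (by linarith)
    simpa only [mul_neg, Real.cos_neg, neg_sq] using this

/-- For every real `y`, `−(1/45)cos(3y) + (3/10)cos(2y) − 3cos(y) + 49/18 ≤ y²`;
equivalently, for every `h > 0` and real `ξ`, the sixth-order discrete Laplacian
symbol satisfies `ψ_h^{(6)}(ξ) ≤ ξ²`. -/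
theorem sixth_order_symbol_upper_bound :
    (∀ y : ℝ, -(1/45) * Real.cos (3*y) + (3/10) * Real.cos (2*y) - 3 * Real.cos y + 49/18 ≤ y^2) ∧
    (∀ h : ℝ, 0 < h → ∀ ξ : ℝ, psi6 h ξ ≤ ξ^2) := by
  refine ⟨aux_all, fun h hh ξ => ?_⟩
  unfold psi6
  rw [div_le_iff₀ (by positivity)]
  have := aux_all (ξ*h)
  rw [← mul_assoc, ← mul_assoc, mul_pow] at this
  exact this
end

section
/- (Stability of the fourth-order finite difference method, d = 1: l²-bound.) Let α ∈ (0,1) ∪ (1,2), λ ≥ 0, σ ≥ 0, ν > 0 and h > 0. Let J ⊂ ℤ be a finite index set, let u : ℤ → ℝ satisfy u_j = 0 for all j ∉ J, and define for each j ∈ ℤ: (A₀u)_j := (1/(2π))·∫_{−π/h}^{π/h} S_{λ,h}^α(ξ)·ǔ(ξ)·e^{iξjh} dξ with ǔ(ξ) := h·Σ_{k∈ℤ} u_k e^{−iξkh}, and (A₁u)_j := h^{−2}·((1/12)u_{j−2} − (4/3)u_{j−1} + (5/2)u_j − (4/3)u_{j+1} + (1/12)u_{j+2}). Suppose (A₀u)_j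 + σ·(A₁u)_j + ν·u_j = f_j for all j ∈ J. Then ν²·h·Σ_{j∈ℤ} u_j² ≤ h·Σ_{j∈J} f_j², i.e., ν·‖u‖_{l²} ≤ ‖f‖_{l²(Ω)}. -/
open Complex MeasureTheory

/-- Discrete symbol of the fourth-order (p = 4) central finite difference
approximation of `-d²/dx²`. -/
noncomputable def psi4 (h ξ : ℝ) : ℝ :=
  ((1/6) * Real.cos (2*ξ*h) - (8/3) * Real.cos (ξ*h) + 5/2) / h^2

/-- Fourth-order discrete frequency `ξ_h = sign(ξ)·√(ψ_h^{(4)}(ξ))`. -/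
noncomputable def xiH (h ξ : ℝ) : ℝ := Real.sign ξ * Real.sqrt (psi4 h ξ)

/-- One-dimensional symbol of the tempered fractional Laplacian. -/
noncomputable def Ssym (α lam ξ : ℝ) : ℂ :=
  (-1 : ℂ) ^ ⌊α⌋ * (((lam : ℂ) + Complex.I * (ξ : ℂ)) ^ (α : ℂ)
    + ((lam : ℂ) - Complex.I * (ξ : ℂ)) ^ (α : ℂ) - 2 * (lam : ℂ) ^ (α : ℂ))

/-- Fourth-order discrete symbol of the tempered fractional Laplacian. -/
noncomputable def SsymH (α lam h ξ : ℝ) : ℂ := Ssym α lam (xiH h ξ)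

/-- Fourth-order discrete tempered fractional Laplacian
`(A₀u)_j = (1/(2π))·∫_{−π/h}^{π/h} S_{λ,h}^α(ξ)·ǔ(ξ)·e^{iξjh} dξ` with
`ǔ(ξ) = h·Σ_{k∈ℤ} u_k e^{−iξkh}`. -/
noncomputable def A0 (α lam h : ℝ) (u : ℤ → ℝ) (j : ℤ) : ℂ :=
  (1/(2*Real.pi) : ℝ) * ∫ ξ in (-(Real.pi/h))..(Real.pi/h),
    SsymH α lam h ξ * ((h : ℂ) * ∑' k : ℤ,
      (u k : ℂ) * Complex.exp (-(Complex.I * (ξ : ℂ) * (k : ℂ) * (h : ℂ)))) *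
      Complex.exp (Complex.I * (ξ : ℂ) * (j : ℂ) * (h : ℂ))

/-- Fourth-order finite difference approximation of `−d²/dx²`. -/
noncomputable def A1 (h : ℝ) (u : ℤ → ℝ) (j : ℤ) : ℝ :=
  ((1/12) * u (j-2) - (4/3) * u (j-1) + (5/2) * u j - (4/3) * u (j+1) + (1/12) * u (j+2)) / h^2

lemma aux_cos_small {α θ : ℝ} (h0 : 0 ≤ α) (h1 : α ≤ 1) (hθ : |θ| ≤ Real.pi / 2) :
    Real.cos θ ^ α ≤ Real.cos (α * θ) := by
  have hθ' := abs_le.mp hθ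
  have hc : 0 ≤ Real.cos θ := Real.cos_nonneg_of_neg_pi_div_two_le_of_le (by linarith) hθ'.2
  have hconc := strictConcaveOn_cos_Icc.concaveOn
  have hpi := Real.pi_pos
  have h2 := hconc.2 (x := θ) (y := 0) ⟨hθ'.1, hθ'.2⟩ ⟨by linarith, by linarith⟩ h0
    (by linarith : 0 ≤ 1 - α) (by ring)
  have h3 := Real.geom_mean_le_arith_mean2_weighted h0 (by linarith : 0 ≤ 1 - α) hc
    (zero_le_one) (by ring)
  simp at h2 h3
  linarith

lemma aux_cos_large {α θ : ℝ} (h1 : 1 < α) (h2 : α < 2) (hθ : |θ| ≤ Real.pi / 2) :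
    Real.cos (α * θ) ≤ Real.cos θ ^ α := by
  have hθ' := abs_le.mp hθ
  have hc : 0 ≤ Real.cos θ := Real.cos_nonneg_of_neg_pi_div_two_le_of_le (by linarith) hθ'.2
  have hpi := Real.pi_pos
  rcases le_total (|α * θ|) (Real.pi / 2) with h | h
  · have h3 := aux_cos_small (α := α⁻¹) (θ := α * θ) (by positivity)
      (inv_le_one_of_one_le₀ h1.le) h
    have hh := abs_le.mp h
    have hc2 : 0 ≤ Real.cos (α * θ) :=
      Real.cos_nonneg_of_neg_pi_div_two_le_of_le (by linarith) hh.2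
    rw [← mul_assoc, inv_mul_cancel₀ (by positivity), one_mul] at h3
    have h4 := Real.rpow_le_rpow (by positivity) h3 (by positivity : 0 ≤ α)
    rwa [← Real.rpow_mul hc2, inv_mul_cancel₀ (by positivity), Real.rpow_one] at h4
  · have : Real.cos (α * θ) ≤ 0 := by
      rw [← Real.cos_abs]
      apply Real.cos_nonpos_of_pi_div_two_le_of_le h
      rw [abs_mul, abs_of_pos (by linarith)]
      nlinarith [abs_nonneg θ]
    have := Real.rpow_nonneg hc α
    linarith

lemma aux_re_cpow {α : ℝ} (hα : 0 < α) (z : ℂ) :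
    (z ^ (α : ℂ)).re = ‖z‖ ^ α * Real.cos (α * z.arg) := by
  rcases eq_or_ne z 0 with rfl | hz
  · rw [Complex.zero_cpow (by exact_mod_cast hα.ne')]
    simp [Real.zero_rpow hα.ne']
  · rw [Complex.cpow_def_of_ne_zero hz, Complex.exp_re]
    have h1 : (Complex.log z * α).re = Real.log ‖z‖ * α := by simp [Complex.log_re]
    have h2 : (Complex.log z * α).im = α * z.arg := by simp [Complex.log_im, mul_comm]
    rw [h1, h2, Real.rpow_def_of_pos (norm_pos_iff.mpr hz)]

lemma aux_re_rpow {α : ℝ} (hα : 0 < α) (z : ℂ) (hz : 0 ≤ z.re) :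
    z.re ^ α = ‖z‖ ^ α * Real.cos z.arg ^ α := by
  have h := Complex.abs_arg_le_pi_div_two_iff.mpr hz
  have hθ' := abs_le.mp h
  have hc : 0 ≤ Real.cos z.arg := Real.cos_nonneg_of_neg_pi_div_two_le_of_le (by linarith) hθ'.2
  rw [← Real.mul_rpow (norm_nonneg _) hc, Complex.norm_mul_cos_arg]

noncomputable def auxG (α lam x : ℝ) : ℝ :=
  (-1 : ℝ) ^ ⌊α⌋ * (2 * (((lam : ℂ) + Complex.I * (x : ℂ)) ^ (α : ℂ)).re - 2 * lam ^ α)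

lemma auxG_nonneg {α lam : ℝ} (hα : α ∈ Set.Ioo (0:ℝ) 1 ∪ Set.Ioo (1:ℝ) 2) (hlam : 0 ≤ lam)
    (x : ℝ) : 0 ≤ auxG α lam x := by
  unfold auxG
  set z : ℂ := (lam : ℂ) + Complex.I * (x : ℂ) with hz
  have hre : z.re = lam := by simp [hz]
  have hα0 : 0 < α := by rcases hα with h | h <;> linarith [h.1]
  have harg := Complex.abs_arg_le_pi_div_two_iff.mpr (hre ▸ hlam : 0 ≤ z.re)
  have h1 := aux_re_rpow hα0 z (hre ▸ hlam)
  rw [hre] at h1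
  rw [aux_re_cpow hα0, h1]
  have hn : 0 ≤ ‖z‖ ^ α := by positivity
  rcases hα with h | h
  · have : ⌊α⌋ = 0 := by rw [Int.floor_eq_iff]; constructor <;> push_cast <;> linarith [h.1, h.2]
    rw [this]
    have := mul_le_mul_of_nonneg_left (aux_cos_small h.1.le h.2.le harg) hn
    simp; linarith
  · have : ⌊α⌋ = 1 := by rw [Int.floor_eq_iff]; constructor <;> push_cast <;> linarith [h.1, h.2]
    rw [this]
    have := mul_le_mul_of_nonneg_left (aux_cos_large h.1 h.2 harg) hn
    simp; linarith

lemma aux_Ssym {α lam : ℝ} (hα : 0 < α) (hlam : 0 ≤ lam) (x : ℝ) :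
    Ssym α lam x = (auxG α lam x : ℝ) := by
  unfold Ssym auxG
  have hconj : ((lam : ℂ) - Complex.I * (x : ℂ)) ^ (α : ℂ)
      = (starRingEnd ℂ) (((lam : ℂ) + Complex.I * (x : ℂ)) ^ (α : ℂ)) := by
    set z : ℂ := (lam : ℂ) + Complex.I * (x : ℂ) with hz
    have harg := Complex.abs_arg_le_pi_div_two_iff.mpr (by simp [hz, hlam] : 0 ≤ z.re)
    have hpi := Real.pi_pos
    have hne : z.arg ≠ Real.pi := by
      intro h; rw [h, abs_of_pos hpi] at harg; linarith
    have : (lam : ℂ) - Complex.I * (x : ℂ) = (starRingEnd ℂ) z := by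
      simp [hz, sub_eq_add_neg]
    rw [this, Complex.conj_cpow _ _ hne]
    simp
  rw [hconj, Complex.add_conj, ← Complex.ofReal_cpow hlam]
  push_cast
  rfl

lemma auxG_neg {α lam : ℝ} (hα : 0 < α) (hlam : 0 ≤ lam) (x : ℝ) :
    auxG α lam (-x) = auxG α lam x := by
  have h1 := aux_Ssym hα hlam x
  have h2 := aux_Ssym hα hlam (-x)
  have h3 : Ssym α lam (-x) = Ssym α lam x := by
    unfold Ssym; push_cast; ring_nf
  rw [h1, h2] at h3
  exact_mod_cast h3

lemma aux_xiH {α lam : ℝ} (hα : 0 < α) (hlam : 0 ≤ lam) (h ξ : ℝ) :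
    auxG α lam (xiH h ξ) = auxG α lam (Real.sqrt (psi4 h ξ)) := by
  unfold xiH
  rcases lt_trichotomy ξ 0 with hx | hx | hx
  · rw [Real.sign_of_neg hx, neg_one_mul, auxG_neg hα hlam]
  · subst hx
    have : psi4 h 0 = 0 := by unfold psi4; simp; left; norm_num
    simp [this]
  · rw [Real.sign_of_pos hx, one_mul]

lemma auxG_cont {α lam : ℝ} (hα : 0 < α) (hlam : 0 ≤ lam) : Continuous (auxG α lam) := by
  unfold auxG
  have : Continuous fun x : ℝ => ((lam : ℂ) + Complex.I * (x : ℂ)) ^ (α : ℂ) := by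
    rw [continuous_iff_continuousAt]
    intro x
    have h1 := Complex.continuousAt_cpow_const_of_re_pos (z := (lam : ℂ) + Complex.I * (x : ℂ))
      (w := α) (by left; simpa using hlam) (by simpa using hα)
    exact ContinuousAt.comp (f := fun x : ℝ => (lam : ℂ) + Complex.I * (x : ℂ))
      (g := fun z : ℂ => z ^ (α : ℂ)) h1 (by fun_prop)
  have := Complex.continuous_re.comp this
  simp only [Function.comp_def] at this
  fun_prop

lemma aux_cont {α lam : ℝ} (hα : 0 < α) (hlam : 0 ≤ lam) (h : ℝ) :
    Continuous (fun ξ => auxG α lam (xiH h ξ)) := by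
  simp only [aux_xiH hα hlam]
  apply (auxG_cont hα hlam).comp
  unfold psi4
  fun_prop

lemma aux_A0 {α lam h : ℝ}
    (hα : α ∈ Set.Ioo (0:ℝ) 1 ∪ Set.Ioo (1:ℝ) 2) (hlam : 0 ≤ lam) (hh : 0 < h)
    (J : Finset ℤ) (u : ℤ → ℝ) (hsupp : ∀ j ∉ J, u j = 0) :
    0 ≤ (∑ j ∈ J, (u j : ℂ) * A0 α lam h u j).re := by
  have hα0 : 0 < α := by rcases hα with h | h <;> linarith [h.1]
  have hpi := Real.pi_pos
  set U : ℝ → ℂ := fun ξ => ∑ k ∈ J,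
      (u k : ℂ) * Complex.exp (-(Complex.I * (ξ : ℂ) * (k : ℂ) * (h : ℂ))) with hU
  have hUc : Continuous U := by fun_prop
  have hts : ∀ ξ : ℝ, ∑' k : ℤ,
      (u k : ℂ) * Complex.exp (-(Complex.I * (ξ : ℂ) * (k : ℂ) * (h : ℂ))) = U ξ := by
    intro ξ
    apply tsum_eq_sum
    intro b hb
    simp [hsupp b hb]
  have hgc := aux_cont hα0 hlam h
  have key : ∑ j ∈ J, (u j : ℂ) * A0 α lam h u j =
      (((1/(2*Real.pi)) * ∫ ξ in (-(Real.pi/h))..(Real.pi/h),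
        auxG α lam (xiH h ξ) * (h * Complex.normSq (U ξ)) : ℝ) : ℂ) := by
    unfold A0 SsymH
    simp only [hts, aux_Ssym hα0 hlam]
    have e1 : ∀ j ∈ J, (u j : ℂ) * (((1/(2*Real.pi) : ℝ) : ℂ) *
        ∫ ξ in (-(Real.pi/h))..(Real.pi/h), ((auxG α lam (xiH h ξ) : ℝ) : ℂ) * ((h : ℂ) * U ξ) *
          Complex.exp (Complex.I * (ξ : ℂ) * (j : ℂ) * (h : ℂ))) =
        ((1/(2*Real.pi) : ℝ) : ℂ) * ∫ ξ in (-(Real.pi/h))..(Real.pi/h),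
          (u j : ℂ) * (((auxG α lam (xiH h ξ) : ℝ) : ℂ) * ((h : ℂ) * U ξ) *
          Complex.exp (Complex.I * (ξ : ℂ) * (j : ℂ) * (h : ℂ))) := by
      intro j _
      rw [intervalIntegral.integral_const_mul]
      ring
    rw [Finset.sum_congr rfl e1, ← Finset.mul_sum, ← intervalIntegral.integral_finsetSum]
    · rw [Complex.ofReal_mul, ← intervalIntegral.integral_ofReal]
      congr 1
      apply intervalIntegral.integral_congr
      intro ξ _
      have hc : (starRingEnd ℂ) (U ξ) = ∑ j ∈ J, (u j : ℂ) *
          Complex.exp (Complex.I * (ξ : ℂ) * (j : ℂ) * (h : ℂ)) := by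
        simp only [hU, map_sum, map_mul, Complex.conj_ofReal, ← Complex.exp_conj, map_neg,
          Complex.conj_I, map_intCast]
        refine Finset.sum_congr rfl fun j _ => ?_
        congr 2; ring
      simp only [Complex.ofReal_mul, Complex.normSq_eq_conj_mul_self, hc, Finset.sum_mul,
        Finset.mul_sum]
      refine Finset.sum_congr rfl fun j _ => ?_
      ring
    · intro j _
      apply Continuous.intervalIntegrable
      have := Complex.continuous_ofReal.comp hgc
      simp only [Function.comp_def] at this
      fun_prop
  rw [key, Complex.ofReal_re]
  apply mul_nonneg (by positivity)
  apply intervalIntegral.integral_nonneg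
  · have : 0 < Real.pi / h := by positivity
    linarith
  · intro ξ _
    exact mul_nonneg (auxG_nonneg hα hlam _) (mul_nonneg hh.le (Complex.normSq_nonneg _))

lemma aux_congr {f g : ℤ → ℝ} {a : ℝ} (hf : HasSum f a) (h : ∀ j, g j = f j) : HasSum g a := by
  rwa [funext h]

lemma aux_A1 {h : ℝ} (J : Finset ℤ) (u : ℤ → ℝ) (hsupp : ∀ j ∉ J, u j = 0) :
    0 ≤ ∑ j ∈ J, u j * A1 h u j := by
  have hfin : (Function.support u).Finite :=
    J.finite_toSet.subset fun j hj => by by_contra hc; exact hj (hsupp j hc)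
  have S : ∀ a b : ℤ, Summable fun j => u (j + a) * u (j + b) := by
    intro a b
    apply summable_of_hasFiniteSupport
    refine Set.Finite.subset (hfin.preimage (f := fun j => j + a) (by intro x _ y _ h; simpa using h)) ?_
    intro j hj
    simp only [Function.mem_support, Set.mem_preimage] at hj ⊢
    exact left_ne_zero_of_mul hj
  set B : ℤ → ℝ := fun d => ∑' j, u j * u (j + d) with hB
  have T : ∀ a b : ℤ, HasSum (fun j => u (j + a) * u (j + b)) (B (b - a)) := by
    intro a b
    have h1 := (S a b).hasSum
    have h2 : ∑' j, u (j + a) * u (j + b) = B (b - a) := by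
      simp only [hB]
      rw [← (Equiv.addRight a).tsum_eq (fun j => u j * u (j + (b - a)))]
      congr 1; ext j; simp only [Equiv.coe_addRight]; congr 2; ring
    rwa [h2] at h1
  have hsym : ∀ d, B (-d) = B d := by
    intro d
    have h1 := T d 0
    have h2 := T 0 d
    simp only [mul_comm (u (_ + d))] at h1
    have := h1.unique h2
    simpa using this
  have e1 : HasSum (fun j => (u (j+1) - u (j+0))^2) (B 0 - 2 * B 1 + B 0) := by
    have := ((T 1 1).sub ((T 0 1).mul_left 2)).add (T 0 0)
    norm_num at this
    refine aux_congr this fun j => ?_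
    simp only [add_zero]
    ring
  have e2 : HasSum (fun j => (u (j+2) - 2 * u (j+1) + u (j+0))^2)
      (B 0 - 4 * B 1 + 2 * B 2 + 4 * B 0 - 4 * B 1 + B 0) := by
    have := (((((T 2 2).sub ((T 1 2).mul_left 4)).add ((T 0 2).mul_left 2)).add
      ((T 1 1).mul_left 4)).sub ((T 0 1).mul_left 4)).add (T 0 0)
    norm_num at this
    refine aux_congr this fun j => ?_
    simp only [add_zero]
    ring
  have e3 : HasSum (fun j => u j * A1 h u j)
      (((1/12) * B (-2) - (4/3) * B (-1) + (5/2) * B 0 - (4/3) * B 1 + (1/12) * B 2) / h^2) := by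
    have := ((((((T 0 (-2)).mul_left (1/12)).sub ((T 0 (-1)).mul_left (4/3))).add
      ((T 0 0).mul_left (5/2))).sub ((T 0 1).mul_left (4/3))).add
      ((T 0 2).mul_left (1/12))).div_const (h^2)
    simp only [sub_zero] at this
    refine aux_congr this fun j => ?_
    unfold A1
    simp only [add_zero, ← sub_eq_add_neg]
    ring
  have e4 : HasSum (fun j => u j * A1 h u j) (∑ j ∈ J, u j * A1 h u j) := by
    apply hasSum_sum_of_ne_finset_zero
    intro j hj
    simp [hsupp j hj]
  rw [e4.unique e3, hsym, hsym]
  have p1 := e1.nonneg fun j => sq_nonneg _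
  have p2 := e2.nonneg fun j => sq_nonneg _
  apply div_nonneg _ (sq_nonneg _)
  linarith

/-- Stability of the fourth-order finite difference method (`d = 1`, `l²`-bound):
if `u` vanishes outside a finite index set `J` and
`(A₀u)_j + σ(A₁u)_j + ν u_j = f_j` for all `j ∈ J`, then
`ν²·h·Σ_{j∈ℤ} u_j² ≤ h·Σ_{j∈J} f_j²`. -/
theorem fourth_order_stability (α lam σ ν h : ℝ)
    (hα : α ∈ Set.Ioo (0:ℝ) 1 ∪ Set.Ioo (1:ℝ) 2) (hlam : 0 ≤ lam)
    (hσ : 0 ≤ σ) (hν : 0 < ν) (hh : 0 < h)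
    (J : Finset ℤ) (u f : ℤ → ℝ) (hsupp : ∀ j ∉ J, u j = 0)
    (heq : ∀ j ∈ J, A0 α lam h u j + (σ : ℂ) * (A1 h u j : ℝ) + (ν : ℂ) * (u j : ℝ) = (f j : ℝ)) :
    ν^2 * (h * ∑' j : ℤ, (u j)^2) ≤ h * ∑ j ∈ J, (f j)^2 := by
  have ht : ∑' j : ℤ, (u j)^2 = ∑ j ∈ J, (u j)^2 :=
    tsum_eq_sum fun j hj => by simp [hsupp j hj]
  rw [ht]
  have h0 := aux_A0 hα hlam hh J u hsupp
  have h1 := aux_A1 (h := h) J u hsupp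
  have hs : ∑ j ∈ J, (u j : ℂ) * A0 α lam h u j =
      ((∑ j ∈ J, (u j * f j - σ * (u j * A1 h u j) - ν * (u j)^2) : ℝ) : ℂ) := by
    rw [Complex.ofReal_sum]
    refine Finset.sum_congr rfl fun j hj => ?_
    have := heq j hj
    push_cast
    rw [← this]
    ring
  rw [hs, Complex.ofReal_re, Finset.sum_sub_distrib, Finset.sum_sub_distrib, ← Finset.mul_sum,
    ← Finset.mul_sum] at h0
  have h2 : 0 ≤ ∑ j ∈ J, (f j - ν * u j)^2 := Finset.sum_nonneg fun j _ => sq_nonneg _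
  have h3 : ∑ j ∈ J, (f j - ν * u j)^2 = ∑ j ∈ J, (f j)^2 - 2 * ν * ∑ j ∈ J, u j * f j
      + ν^2 * ∑ j ∈ J, (u j)^2 := by
    rw [Finset.mul_sum, Finset.mul_sum, ← Finset.sum_sub_distrib, ← Finset.sum_add_distrib]
    refine Finset.sum_congr rfl fun j _ => ?_
    ring
  have h4 := mul_nonneg hσ h1
  have h5 : ν * ∑ j ∈ J, (u j)^2 ≤ ∑ j ∈ J, u j * f j := by linarith
  have h6 := mul_le_mul_of_nonneg_left h5 hν.le
  have h7 : ν^2 * ∑ j ∈ J, (u j)^2 ≤ ∑ j ∈ J, (f j)^2 := by nlinarith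
  calc _ = h * (ν^2 * ∑ j ∈ J, (u j)^2) := by ring
    _ ≤ _ := mul_le_mul_of_nonneg_left h7 hh.le
end
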